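/- Let d be a rational prime, m ≥ 2, n ≥ 1. Suppose the reduction G̅_{d,0,n}(c) ∈ 𝔽_d[c] factors as G̅_{d,0,n} = f_1 ⋯ f_k with f_1, …, f_k ∈ 𝔽_d[c] distinct irreducible polynomials, and let f̃_1, …, f̃_k ∈ ℤ[c] be any lifts. Let c_0 be a root of G_{d,m,n}(c) and K = ℚ(c_0). Then in O_K one has (d) = (d, f̃_1(c_0))^{M_{m,n}} ⋯ (d, f̃_k(c_0))^{M_{m,n}}, where M_{m,n} = d^{m−1}(d−1) if n ∤ m−1 and M_{m,n} = (d^{m−1}−1)(d−1) if n | m−1. -/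

import Mathlib

open Polynomial

noncomputable section

/-- `critPoly d i` is `f_{c,d}^i(0)` as a polynomial in the variable `c` over `ℤ`,
where `f_{c,d}(x) = x^d + c`. -/
def critPoly (d : ℕ) : ℕ → Polynomial ℤ
  | 0 => 0
  | i + 1 => critPoly d i ^ d + X

/-- The field of rational functions in `c` over `ℚ`, realized as the fraction field of `ℤ[c]`. -/
abbrev RF : Type := FractionRing (Polynomial ℤ)

/-- The natural inclusion `ℤ[c] → ℚ(c)`. -/
def toRF (p : Polynomial ℤ) : RF := algebraMap (Polynomial ℤ) RF p

/-- `G_{d,0,n} = ∏_{k ∣ n} (f_{c,d}^k(0))^{μ(n/k)}` as a rational function. -/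
def G0Rat (d n : ℕ) : RF :=
  ∏ k ∈ n.divisors, toRF (critPoly d k) ^ (ArithmeticFunction.moebius (n / k))

/-- `F_{d,m,n}` as a rational function. -/
def FRat (d m n : ℕ) : RF :=
  ∏ k ∈ n.divisors,
    ((toRF (critPoly d (m + k)) - toRF (critPoly d m)) /
      (toRF (critPoly d (m - 1 + k)) - toRF (critPoly d (m - 1)))) ^
      (ArithmeticFunction.moebius (n / k))

/-- `G_{d,m,n}` (for `m ≥ 2`) as a rational function. -/
def GRat (d m n : ℕ) : RF :=
  if n ∣ m - 1 then FRat d m n / FRat d 1 n else FRat d m n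

/-- `G : ℤ[c]` is the Misiurewicz polynomial `G_{d,m,n}` (for `m ≥ 2`). -/
def IsMisiurewicz (d m n : ℕ) (G : Polynomial ℤ) : Prop := toRF G = GRat d m n

/-- `G0 : ℤ[c]` is the polynomial `G_{d,0,n}`. -/
def IsG0 (d n : ℕ) (G0 : Polynomial ℤ) : Prop := toRF G0 = G0Rat d n

/-- The critical orbit in a general ring. -/
def orb {R : Type*} [CommRing R] (d : ℕ) (c : R) : ℕ → R
  | 0 => 0
  | i + 1 => orb d c i ^ d + c

section Orb
variable {R : Type*} [CommRing R] {T : Type*} [CommRing T]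

lemma critPoly_eq_orb (d i : ℕ) : critPoly d i = orb d (X : ℤ[X]) i := by
  induction i with
  | zero => rfl
  | succ i ih => simp [critPoly, orb, ih]

lemma orb_map (φ : R →+* T) (d : ℕ) (c : R) (i : ℕ) : φ (orb d c i) = orb d (φ c) i := by
  induction i with
  | zero => simp [orb]
  | succ i ih => simp [orb, ih]

lemma orb_iter (d : ℕ) (c : R) (i : ℕ) : orb d c i = (fun x => x ^ d + c)^[i] 0 := by
  induction i with
  | zero => rfl
  | succ i ih => rw [Function.iterate_succ_apply', ← ih]; rfl

lemma orb_periodic_iff (d : ℕ) (c : R) (j k : ℕ) :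
    orb d c (j + k) - orb d c j = 0 ↔
      Function.IsPeriodicPt (fun x => x ^ d + c) k (orb d c j) := by
  rw [sub_eq_zero, orb_iter d c (j + k), add_comm, Function.iterate_add_apply, ← orb_iter]
  rfl

/-- the geometric sum -/
def gs (d : ℕ) (x y : R) : R := ∑ i ∈ Finset.range d, x ^ i * y ^ (d - 1 - i)

lemma gs_map (φ : R →+* T) (d : ℕ) (x y : R) : φ (gs d x y) = gs d (φ x) (φ y) := by
  simp [gs]

lemma gs_self (d : ℕ) (x : R) : gs d x x = d * x ^ (d - 1) := by
  simp only [gs]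
  rw [Finset.sum_congr rfl (g := fun _ => x ^ (d - 1))]
  · simp
  · intro i hi
    rw [← pow_add]
    congr 1
    have := Finset.mem_range.1 hi
    omega

lemma gs_smul (d : ℕ) (a x y : R) : gs d (a * x) (a * y) = a ^ (d - 1) * gs d x y := by
  simp only [gs, Finset.mul_sum]
  refine Finset.sum_congr rfl fun i hi => ?_
  have := Finset.mem_range.1 hi
  have h : d - 1 = i + (d - 1 - i) := by omega
  rw [mul_pow, mul_pow]
  conv_rhs => rw [h]
  rw [pow_add, ← h]
  ring

lemma gs_mem (d : ℕ) (hd : 2 ≤ d) (I : Ideal R) {x y : R} (hx : x ∈ I) (hy : y ∈ I) :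
    gs d x y ∈ I := by
  refine I.sum_mem fun i hi => ?_
  by_cases h : i = 0
  · subst h
    exact I.mul_mem_left _ (I.pow_mem_of_mem hy _ (by omega))
  · exact I.mul_mem_right _ (I.pow_mem_of_mem hx _ (by omega))

lemma orb_step (d : ℕ) (c : R) (j k : ℕ) :
    orb d c (j + 1 + k) - orb d c (j + 1) =
      (orb d c (j + k) - orb d c j) * gs d (orb d c (j + k)) (orb d c j) := by
  rw [show j + 1 + k = (j + k) + 1 by ring]
  simp only [orb, gs]
  rw [mul_comm, geom_sum₂_mul]
  ring

lemma orb_dvd (d : ℕ) (c : R) (j k l : ℕ) :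
    orb d c (j + k) - orb d c j ∣ orb d c (j + l + k) - orb d c (j + l) := by
  induction l with
  | zero => exact dvd_rfl
  | succ l ih => 
    rw [← add_assoc, orb_step]
    exact ih.mul_right _

lemma orb_dvd' (d : ℕ) (c : R) (k : ℕ) {j l : ℕ} (h : j ≤ l) :
    orb d c (j + k) - orb d c j ∣ orb d c (l + k) - orb d c l := by
  obtain ⟨e, rfl⟩ := Nat.exists_eq_add_of_le h
  exact orb_dvd d c j k e

lemma orb_mul (d : ℕ) (c : R) (I : Ideal R) (j p : ℕ) (π : R) (hπ : π ∈ I)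
    (h : orb d c (j + p + p) - orb d c (j + p) = (orb d c (j + p) - orb d c j) * π) (r : ℕ) :
    ∃ π' ∈ I, orb d c (j + (r + 1) * p) - orb d c j = (orb d c (j + p) - orb d c j) * (1 + π') := by
  induction r with
  | zero => exact ⟨0, I.zero_mem, by simp⟩
  | succ r ih =>
    obtain ⟨π', h1, h2⟩ := ih
    obtain ⟨w, hw⟩ := orb_dvd d c (j + p) p (r * p)
    refine ⟨π' + π * w, I.add_mem h1 (I.mul_mem_right _ hπ), ?_⟩
    have e1 : j + (r + 1 + 1) * p = j + p + r * p + p := by ring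
    have e2 : j + p + r * p = j + (r + 1) * p := by ring
    rw [h] at hw
    rw [e1]
    rw [e2] at hw ⊢
    linear_combination hw + h2

/-- if one of the factors is in `I` -/
lemma orb_mul' (d : ℕ) (c : R) (I : Ideal R) (j p : ℕ) (hp : 1 ≤ p)
    (h : gs d (orb d c (j + p)) (orb d c j) ∈ I) (r : ℕ) :
    ∃ π' ∈ I, orb d c (j + (r + 1) * p) - orb d c j = (orb d c (j + p) - orb d c j) * (1 + π') := by
  obtain ⟨w, hw⟩ := orb_dvd d c (j + 1) p (p - 1)
  rw [orb_step] at hw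
  refine orb_mul d c I j p _ (I.mul_mem_right w h) ?_ r
  rw [← mul_assoc, ← hw]
  rw [show j + 1 + (p - 1) = j + p by omega]

/-- multiples at zero -/
lemma orb_zero_mul (d : ℕ) (hd : 2 ≤ d) (c : R) (p : ℕ) (hp : 1 ≤ p) (r : ℕ) :
    ∃ w, orb d c ((r + 1) * p) = orb d c p * (1 + orb d c p * w) := by
  obtain ⟨π, h1, h2⟩ := orb_mul' d c (Ideal.span {orb d c p}) 0 p hp
    (by
      refine gs_mem d hd _ ?_ (by simp [orb])
      simp) r
  obtain ⟨w, rfl⟩ := Ideal.mem_span_singleton'.1 h1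
  refine ⟨w, ?_⟩
  simp [orb] at h2
  rw [h2]
  ring

lemma orb_char (d : ℕ) [Fact d.Prime] [CharP R d] (c : R) (j k : ℕ) :
    orb d c (j + k) - orb d c j = orb d c k ^ d ^ j := by
  induction j with
  | zero => simp [orb]
  | succ j ih =>
    rw [pow_succ, pow_mul, ← ih, sub_pow_char]
    rw [show j + 1 + k = (j + k) + 1 by ring]
    simp [orb]

lemma prime_binom (d : ℕ) (hd : d.Prime) (v x : R) :
    ∃ Q, (v + x) ^ d = v ^ d + x ^ d + d * x * (v ^ (d - 1) + x * Q) := by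
  obtain ⟨e, rfl⟩ : ∃ e, d = e + 2 := ⟨d - 2, by have := hd.two_le; omega⟩
  refine ⟨∑ i ∈ Finset.range e, x ^ i * v ^ (e - i) * (((e + 2).choose (i + 2) / (e + 2) : ℕ) : R), ?_⟩
  rw [add_comm v x, add_pow, Finset.sum_range_succ, Finset.sum_range_succ', Finset.sum_range_succ']
  have : ∀ i ∈ Finset.range e, x ^ (i + 1 + 1) * v ^ (e + 2 - (i + 1 + 1)) *
      (((e + 2).choose (i + 1 + 1) : ℕ) : R) = ((e + 2 : ℕ) : R) * x * x *
      (x ^ i * v ^ (e - i) * (((e + 2).choose (i + 2) / (e + 2) : ℕ) : R)) := by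
    intro i hi
    have hi := Finset.mem_range.1 hi
    have h1 : (e + 2) ∣ (e + 2).choose (i + 2) := hd.dvd_choose_self (by omega) (by omega)
    obtain ⟨b, hb⟩ := h1
    rw [show i + 1 + 1 = i + 2 by ring, hb, Nat.mul_div_cancel_left _ (by omega),
      show e + 2 - (i + 2) = e - i by omega]
    push_cast
    ring
  rw [Finset.sum_congr rfl this, ← Finset.mul_sum]
  simp
  ring

lemma gs_binom [IsDomain R] (d : ℕ) (hd : d.Prime) (v x : R) (hx : x ≠ 0) :
    ∃ Q, gs d (v + x) v = x ^ (d - 1) + d * (v ^ (d - 1) + x * Q) := by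
  obtain ⟨Q, hQ⟩ := prime_binom d hd v x
  refine ⟨Q, mul_right_cancel₀ hx ?_⟩
  have h := geom_sum₂_mul (v + x) v d
  rw [add_sub_cancel_left] at h
  rw [gs, h, hQ]
  have : x ^ d = x ^ (d - 1) * x := by rw [← pow_succ, Nat.sub_add_cancel hd.one_le]
  rw [this]; ring
end Orb

lemma poly_ne (d : ℕ) [hd : Fact d.Prime] (k : ℕ) (hk : 1 ≤ k) :
    derivative (orb d (X : (ZMod d)[X]) k) = 1 := by
  obtain ⟨e, rfl⟩ : ∃ e, k = e + 1 := ⟨k - 1, by omega⟩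
  simp [orb, derivative_pow]

lemma polyD_ne (d : ℕ) [hd : Fact d.Prime] (j k : ℕ) (hk : 1 ≤ k) :
    orb d (X : ℤ[X]) (j + k) - orb d X j ≠ 0 := by
  intro h
  have h2 := congrArg (Polynomial.mapRingHom (Int.castRingHom (ZMod d))) h
  rw [map_sub, orb_map, orb_map, map_zero] at h2
  simp only [coe_mapRingHom, map_X] at h2
  rw [orb_char] at h2
  have h3 := poly_ne d k hk
  rw [eq_zero_of_pow_eq_zero h2] at h3
  simp at h3

/-- Equality up to quotients of elements of `S`. -/
def RelS (S : Submonoid ℤ[X]) (x y : RF) : Prop :=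
  ∃ A ∈ S, ∃ B ∈ S, x * toRF B = y * toRF A

lemma toRF_mul (a b : ℤ[X]) : toRF (a * b) = toRF a * toRF b := by simp [toRF]
lemma toRF_sub (a b : ℤ[X]) : toRF (a - b) = toRF a - toRF b := by simp [toRF]
lemma toRF_pow (a : ℤ[X]) (n : ℕ) : toRF (a ^ n) = toRF a ^ n := by simp [toRF]
lemma toRF_one : toRF 1 = 1 := by simp [toRF]
lemma toRF_inj : Function.Injective toRF := IsFractionRing.injective ℤ[X] RF
lemma toRF_ne {a : ℤ[X]} (h : a ≠ 0) : toRF a ≠ 0 := by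
  intro h1
  apply h
  apply toRF_inj
  rw [h1]; simp [toRF]

section RelS
variable {S : Submonoid ℤ[X]}

lemma RelS.refl (x : RF) : RelS S x x := ⟨1, S.one_mem, 1, S.one_mem, rfl⟩

lemma RelS.symm {x y : RF} (h : RelS S x y) : RelS S y x := by
  obtain ⟨A, hA, B, hB, h⟩ := h
  exact ⟨B, hB, A, hA, h.symm⟩

lemma RelS.mul {x y z w : RF} (h : RelS S x y) (h' : RelS S z w) : RelS S (x * z) (y * w) := by
  obtain ⟨A, hA, B, hB, h⟩ := h
  obtain ⟨A', hA', B', hB', h'⟩ := h'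
  refine ⟨A * A', S.mul_mem hA hA', B * B', S.mul_mem hB hB', ?_⟩
  rw [toRF_mul, toRF_mul]
  linear_combination z * toRF B' * h + y * toRF A * h'

lemma RelS.trans {x y z : RF} (h : RelS S x y) (h' : RelS S y z) :
    RelS S x z := by
  obtain ⟨A, hA, B, hB, h⟩ := h
  obtain ⟨A', hA', B', hB', h'⟩ := h'
  refine ⟨A * A', S.mul_mem hA hA', B * B', S.mul_mem hB hB', ?_⟩
  rw [toRF_mul, toRF_mul]
  linear_combination toRF B' * h + toRF A * h'

lemma RelS.inv (h0 : (0 : ℤ[X]) ∉ S) {x y : RF} (h : RelS S x y) : RelS S x⁻¹ y⁻¹ := by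
  obtain ⟨A, hA, B, hB, h⟩ := h
  have hA0 : toRF A ≠ 0 := toRF_ne (by rintro rfl; exact h0 hA)
  have hB0 : toRF B ≠ 0 := toRF_ne (by rintro rfl; exact h0 hB)
  refine ⟨B, hB, A, hA, ?_⟩
  by_cases hx : x = 0
  · subst hx
    have : y = 0 := by simpa [hA0] using h.symm
    simp [this]
  · have hy : y ≠ 0 := by
      rintro rfl
      simp [hx, hB0] at h
    field_simp
    linear_combination -h

lemma RelS.div (h0 : (0 : ℤ[X]) ∉ S) {x y z w : RF} (h : RelS S x y) (h' : RelS S z w) :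
    RelS S (x / z) (y / w) := by
  rw [div_eq_mul_inv, div_eq_mul_inv]
  exact h.mul (h'.inv h0)

lemma RelS.pow {x y : RF} (h : RelS S x y) (n : ℕ) : RelS S (x ^ n) (y ^ n) := by
  induction n with
  | zero => simpa using RelS.refl 1
  | succ n ih => rw [pow_succ, pow_succ]; exact ih.mul h

lemma RelS.zpow (h0 : (0 : ℤ[X]) ∉ S) {x y : RF} (h : RelS S x y) (n : ℤ) :
    RelS S (x ^ n) (y ^ n) := by
  cases n with
  | ofNat n => simpa using h.pow n
  | negSucc n => rw [zpow_negSucc, zpow_negSucc]; exact (h.pow _).inv h0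

lemma RelS.prod {ι : Type*} (s : Finset ι) (f g : ι → RF) (h : ∀ i ∈ s, RelS S (f i) (g i)) :
    RelS S (∏ i ∈ s, f i) (∏ i ∈ s, g i) := by
  classical
  induction s using Finset.induction_on with
  | empty => simpa using RelS.refl 1
  | insert a s ha ih =>
    rw [Finset.prod_insert ha, Finset.prod_insert ha]
    exact (h a (by simp)).mul (ih fun i hi => h i (by simp [hi]))

lemma RelS.of_mem {A : ℤ[X]} (h : A ∈ S) : RelS S (toRF A) 1 :=
  ⟨A, h, 1, S.one_mem, by rw [toRF_one]; ring⟩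
end RelS

lemma sum_moeb (n : ℕ) (hn : 1 ≤ n) (p : ℕ) (hp : p ∣ n) :
    ∑ k ∈ n.divisors, (if p ∣ k then ArithmeticFunction.moebius (n / k) else 0) =
      if p = n then 1 else 0 := by
  obtain ⟨q, rfl⟩ := hp
  have hp0 : 0 < p := Nat.pos_of_ne_zero (by rintro rfl; simp at hn)
  have hq0 : 0 < q := Nat.pos_of_ne_zero (by rintro rfl; simp at hn)
  have h1 : ∑ i ∈ q.divisors, ArithmeticFunction.moebius (q / i) = if q = 1 then 1 else 0 := by
    rw [Nat.sum_div_divisors q (fun i => ArithmeticFunction.moebius i)]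
    rw [← ArithmeticFunction.coe_mul_zeta_apply, ArithmeticFunction.moebius_mul_coe_zeta,
      ArithmeticFunction.one_apply]
  have h2 : (p = p * q) ↔ q = 1 := by
    constructor
    · intro h
      have : p * 1 = p * q := by omega
      exact (Nat.eq_of_mul_eq_mul_left hp0 this).symm
    · rintro rfl; simp
  simp only [h2]
  rw [← h1, ← Finset.sum_filter]
  symm
  refine Finset.sum_bij (fun i _ => p * i) ?_ ?_ ?_ ?_
  · intro i hi
    have := Nat.mem_divisors.1 hi
    simp only [Finset.mem_filter, Nat.mem_divisors]
    exact ⟨⟨mul_dvd_mul_left p this.1, by positivity⟩, dvd_mul_right _ _⟩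
  · intro i _ j _ h
    exact Nat.eq_of_mul_eq_mul_left hp0 h
  · intro b hb
    simp only [Finset.mem_filter, Nat.mem_divisors] at hb
    obtain ⟨⟨h1, h2⟩, i, rfl⟩ := hb
    exact ⟨i, Nat.mem_divisors.2 ⟨Nat.dvd_of_mul_dvd_mul_left hp0 h1, by omega⟩, rfl⟩
  · intro i _
    rw [Nat.mul_div_mul_left _ _ hp0]

lemma prod_zpow_ite (y : RF) (hy : y ≠ 0) (s : Finset ℕ) (q : ℕ → Prop) [DecidablePred q] (e : ℕ → ℤ) :
    ∏ k ∈ s, (if q k then y else 1) ^ e k = y ^ ∑ k ∈ s, (if q k then e k else 0) := by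
  induction s using Finset.induction_on with
  | empty => simp
  | insert a s ha ih =>
    rw [Finset.prod_insert ha, Finset.sum_insert ha, zpow_add₀ hy, ih]
    split_ifs <;> simp

lemma mob {S : Submonoid ℤ[X]} (h0 : (0 : ℤ[X]) ∉ S) (n : ℕ) (hn : 1 ≤ n) (p : ℕ) (y : RF)
    (hy : p ∣ n → y ≠ 0) (h : ℕ → RF)
    (hh : ∀ k ∈ n.divisors, RelS S (h k) (if p ∣ k then y else 1)) :
    RelS S (∏ k ∈ n.divisors, h k ^ ArithmeticFunction.moebius (n / k))
      (if p = n then y else 1) := by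
  have h1 := RelS.prod (S := S) n.divisors (fun k => h k ^ ArithmeticFunction.moebius (n / k))
    (fun k => (if p ∣ k then y else 1) ^ ArithmeticFunction.moebius (n / k))
    (fun k hk => (hh k hk).zpow h0 _)
  convert h1 using 1
  by_cases hp : p ∣ n
  · rw [prod_zpow_ite y (hy hp) _ (fun k => p ∣ k), sum_moeb n hn p hp]
    split_ifs <;> simp
  · rw [if_neg (by rintro rfl; exact hp dvd_rfl)]
    symm
    refine Finset.prod_eq_one fun k hk => ?_
    rw [if_neg, one_zpow]
    intro h
    exact hp (h.trans (Nat.dvd_of_mem_divisors hk))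

/-- existence of the eventual period (zero if the orbit is infinite). -/
lemma exists_period {R : Type*} [CommRing R] (d : ℕ) (c : R) :
    ∃ p : ℕ, ∀ j k, 1 ≤ k → (orb d c (j + k) - orb d c j = 0 ↔
      (p ∣ k ∧ orb d c (j + p) - orb d c j = 0)) := by
  classical
  by_cases h : ∃ j k, 1 ≤ k ∧ orb d c (j + k) - orb d c j = 0
  · obtain ⟨j₀, k₀, hk₀, h₀⟩ := h
    have hper : orb d c j₀ ∈ Function.periodicPts (fun x => x ^ d + c) :=
      ⟨k₀, hk₀, (orb_periodic_iff d c j₀ k₀).1 h₀⟩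
    refine ⟨Function.minimalPeriod (fun x => x ^ d + c) (orb d c j₀), fun j k hk => ?_⟩
    simp only [orb_periodic_iff]
    constructor
    · intro h
      have hper' : orb d c j ∈ Function.periodicPts (fun x => x ^ d + c) := ⟨k, hk, h⟩
      have e1 := Function.minimalPeriod_apply_iterate hper j
      have e2 := Function.minimalPeriod_apply_iterate hper' j₀
      have e3 : (fun x => x ^ d + c)^[j] (orb d c j₀) = (fun x => x ^ d + c)^[j₀] (orb d c j) := by
        rw [orb_iter, orb_iter, ← Function.iterate_add_apply, ← Function.iterate_add_apply, add_comm]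
      rw [e3, e2] at e1
      rw [← e1]
      exact ⟨h.minimalPeriod_dvd, Function.isPeriodicPt_minimalPeriod _ _⟩
    · rintro ⟨⟨q, rfl⟩, h2⟩
      exact h2.mul_const q
  · push Not at h
    refine ⟨0, fun j k hk => ?_⟩
    constructor
    · intro h'; exact absurd h' (h j k hk)
    · rintro ⟨h1, _⟩
      have := Nat.eq_zero_of_zero_dvd h1
      omega

section Exact
variable {R : Type*} [CommRing R] [IsDomain R]

/-- polynomials not vanishing under `φ` -/
def nzS (φ : ℤ[X] →+* R) : Submonoid ℤ[X] where
  carrier := {A | φ A ≠ 0}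
  one_mem' := by simp
  mul_mem' := by
    intro a b ha hb
    simp only [Set.mem_ofPred_eq, map_mul] at *
    exact mul_ne_zero ha hb

lemma mem_nzS (φ : ℤ[X] →+* R) (A : ℤ[X]) : A ∈ nzS φ ↔ φ A ≠ 0 := Iff.rfl

lemma zero_nzS (φ : ℤ[X] →+* R) : (0 : ℤ[X]) ∉ nzS φ := by simp [mem_nzS]

/-- difference polynomials -/
def DP (d j k : ℕ) : ℤ[X] := orb d X (j + k) - orb d X j

lemma DP_map (φ : ℤ[X] →+* R) (d j k : ℕ) :
    φ (DP d j k) = orb d (φ X) (j + k) - orb d (φ X) j := by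
  rw [DP, map_sub, orb_map, orb_map]

lemma DP_rel (d : ℕ) (φ : ℤ[X] →+* R) (hdR : ∀ w : R, 1 + d * w ≠ 0) (p : ℕ)
    (hp : ∀ j k, 1 ≤ k → (φ (DP d j k) = 0 ↔ (p ∣ k ∧ φ (DP d j p) = 0))) (j k : ℕ) (hk : 1 ≤ k) :
    RelS (nzS φ) (toRF (DP d j k)) (if p ∣ k then toRF (DP d j p) else 1) := by
  split_ifs with h
  · by_cases h2 : φ (DP d j p) = 0
    · obtain ⟨q, rfl⟩ := h
      have hp1 : 1 ≤ p := Nat.pos_of_ne_zero (by rintro rfl; simp at hk)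
      have hq1 : 1 ≤ q := Nat.pos_of_ne_zero (by rintro rfl; simp at hk)
      obtain ⟨π, h3, h4⟩ := orb_mul' d (X : ℤ[X]) ((Ideal.span {(d : R)}).comap φ) j p hp1
        (by
          rw [Ideal.mem_comap, gs_map, orb_map, orb_map]
          rw [DP_map, sub_eq_zero] at h2
          rw [h2, gs_self]
          exact Ideal.mul_mem_right _ _ (Ideal.subset_span rfl)) (q - 1)
      rw [Nat.sub_add_cancel hq1, mul_comm q p] at h4
      rw [Ideal.mem_comap] at h3
      obtain ⟨w, hw⟩ := Ideal.mem_span_singleton'.1 h3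
      refine ⟨1 + π, ?_, 1, (nzS φ).one_mem, ?_⟩
      · rw [mem_nzS, map_add, map_one, ← hw, mul_comm]
        exact hdR w
      · rw [toRF_one, mul_one, ← toRF_mul]
        exact congrArg toRF h4
    · have h3 : φ (DP d j k) ≠ 0 := fun h4 => h2 ((hp j k hk).1 h4).2
      exact (RelS.of_mem h3).trans (RelS.of_mem (S := nzS φ) h2).symm
  · exact RelS.of_mem (S := nzS φ) (fun h4 => h ((hp j k hk).1 h4).1)

lemma FRat_eq (d m n : ℕ) : FRat d m n = ∏ k ∈ n.divisors,
    (toRF (DP d m k) / toRF (DP d (m - 1) k)) ^ (ArithmeticFunction.moebius (n / k)) := by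
  simp only [FRat, DP, toRF_sub, critPoly_eq_orb]

lemma FRat_rel (d : ℕ) [hd : Fact d.Prime] (φ : ℤ[X] →+* R) (hdR : ∀ w : R, 1 + d * w ≠ 0) (p : ℕ)
    (hp : ∀ j k, 1 ≤ k → (φ (DP d j k) = 0 ↔ (p ∣ k ∧ φ (DP d j p) = 0))) (m n : ℕ) (hn : 1 ≤ n) :
    RelS (nzS φ) (FRat d m n)
      (if p = n then toRF (DP d m p) / toRF (DP d (m - 1) p) else 1) := by
  rw [FRat_eq]
  apply mob (zero_nzS φ) n hn
  · intro h
    have hp1 : 1 ≤ p := Nat.pos_of_dvd_of_pos h hn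
    exact div_ne_zero (toRF_ne (polyD_ne d _ _ hp1)) (toRF_ne (polyD_ne d _ _ hp1))
  · intro k hk
    have hk1 : 1 ≤ k := Nat.pos_of_mem_divisors hk
    have := (DP_rel d φ hdR p hp m k hk1).div (zero_nzS φ) (DP_rel d φ hdR p hp (m - 1) k hk1)
    convert this using 1
    split_ifs <;> simp

lemma not_rel_one (φ : ℤ[X] →+* R) (G : ℤ[X]) (h : φ G = 0) : ¬ RelS (nzS φ) (toRF G) 1 := by
  rintro ⟨A, hA, B, hB, h1⟩
  rw [one_mul, ← toRF_mul] at h1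
  have := toRF_inj h1
  apply hA
  rw [← this, map_mul, h, zero_mul]

lemma exact_type [CharZero R] (d m n : ℕ) [hd : Fact d.Prime] (hm : 2 ≤ m) (hn : 1 ≤ n)
    (G : ℤ[X]) (hG : IsMisiurewicz d m n G) (φ : ℤ[X] →+* R) (hdR : ∀ w : R, 1 + d * w ≠ 0)
    (hφ : φ G = 0) :
    (∀ j k, 1 ≤ k → orb d (φ X) (j + k) - orb d (φ X) j = 0 → n ∣ k) ∧
    orb d (φ X) (m + n) - orb d (φ X) m = 0 ∧
    orb d (φ X) (m - 1 + n) - orb d (φ X) (m - 1) ≠ 0 := by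
  have hd2 := hd.out.two_le
  obtain ⟨p, hp⟩ := exists_period d (φ X)
  simp only [← DP_map] at hp ⊢
  have hno := not_rel_one φ G hφ
  have h0 := zero_nzS φ
  rw [IsMisiurewicz, GRat] at hG
  rw [hG] at hno
  have hF := fun m => FRat_rel d φ hdR p hp m n hn
  have hpn : p = n := by
    by_contra hpn
    apply hno
    have h1 := hF m
    have h2 := hF 1
    rw [if_neg hpn] at h1 h2
    split_ifs
    · simpa using h1.div h0 h2
    · exact h1
  subst hpn
  simp only [if_true] at hF
  have hdvd : ∀ j l, j ≤ l → φ (DP d l p) ≠ 0 → φ (DP d j p) ≠ 0 := by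
    intro j l hjl h1 h2
    apply h1
    rw [DP_map] at h2 ⊢
    have := orb_dvd' d (φ X) p hjl
    rw [h2] at this
    exact zero_dvd_iff.1 this
  have hne : ∀ j, toRF (DP d j p) ≠ 0 := fun j => toRF_ne (polyD_ne d _ _ hn)
  refine ⟨fun j k hk h => ((hp j k hk).1 h).1, ?_, ?_⟩
  · by_contra h
    apply hno
    have hall : ∀ j ≤ m, RelS (nzS φ) (toRF (DP d j p)) 1 := fun j hj =>
      RelS.of_mem (S := nzS φ) (hdvd j m hj h)
    have h1 := (hF m).trans ((hall m le_rfl).div h0 (hall (m - 1) (by omega)))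
    have h2 := (hF 1).trans ((hall 1 (by omega)).div h0 (hall (1 - 1) (by omega)))
    rw [div_one] at h1 h2
    split_ifs
    · simpa using h1.div h0 h2
    · exact h1
  · intro h
    -- the geometric sums
    have hE : ∀ j, toRF (DP d (j + 1) p) / toRF (DP d j p) =
        toRF (gs d (orb d X (j + p)) (orb d X j)) := by
      intro j
      rw [div_eq_iff (hne j), ← toRF_mul, DP, orb_step, mul_comm]
      rfl
    have hF1 := hF 1
    rw [show (1 : ℕ) - 1 = 0 from rfl, hE 0] at hF1
    have hFm := hF m
    obtain ⟨l, rfl⟩ : ∃ l, m = l + 1 := ⟨m - 1, by omega⟩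
    simp only [Nat.add_sub_cancel] at *
    rw [hE l] at hFm
    have hg0 : gs d (orb d X (0 + p)) (orb d (X : ℤ[X]) 0) = orb d X p ^ (d - 1) := by
      simp only [zero_add, orb, gs]
      rw [Finset.sum_eq_single (d - 1)]
      · simp
      · intro b hb hb2
        have := Finset.mem_range.1 hb
        rw [zero_pow (by omega), mul_zero]
      · intro h
        exact absurd (Finset.mem_range.2 (by omega)) h
    rw [hg0] at hF1
    by_cases ha : orb d (φ X) l = 0
    · -- periodic critical point
      have h1 : φ (DP d 0 l) = 0 := by rw [DP_map]; simp [orb, ha]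
      obtain ⟨h2, h3⟩ := (hp 0 l (by omega)).1 h1
      obtain ⟨r, rfl⟩ := h2
      have hr : 1 ≤ r := Nat.pos_of_ne_zero (by rintro rfl; simp at hm)
      obtain ⟨w, hw⟩ := orb_zero_mul d hd2 (X : ℤ[X]) p hn (r - 1)
      obtain ⟨w', hw'⟩ := orb_zero_mul d hd2 (X : ℤ[X]) p hn r
      rw [Nat.sub_add_cancel hr, mul_comm] at hw
      rw [show (r + 1) * p = p * r + p by ring] at hw'
      rw [hw, hw', gs_smul] at hFm
      have hap : φ (orb d X p) = 0 := by
        simpa [DP, orb] using h3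
      have hV : gs d (1 + orb d X p * w') (1 + orb d X p * w) ∈ nzS φ := by
        rw [mem_nzS, gs_map]
        simp only [map_add, map_one, map_mul, hap, zero_mul, add_zero, gs_self]
        simp [hd.out.ne_zero]
      apply hno
      rw [if_pos (dvd_mul_right _ _)]
      have h4 := hFm.div h0 hF1
      rw [toRF_mul, mul_div_cancel_left₀] at h4
      · exact h4.trans (RelS.of_mem hV)
      · apply toRF_ne
        apply pow_ne_zero
        have := polyD_ne d 0 p hn
        simpa [orb] using this
    · have hE1 : gs d (orb d X (l + p)) (orb d X l) ∈ nzS φ := by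
        rw [mem_nzS, gs_map, orb_map, orb_map]
        rw [DP_map, sub_eq_zero] at h
        rw [h, gs_self]
        exact mul_ne_zero (by exact_mod_cast hd.out.ne_zero) (pow_ne_zero _ ha)
      have h5 := hFm.trans (RelS.of_mem hE1)
      split_ifs at hno hG with hdiv
      · obtain ⟨A, hA, B, hB, h6⟩ := h5.div h0 hF1
        rw [← hG] at h6
        have hne' : toRF (orb d X p ^ (d - 1)) ≠ 0 := by
          apply toRF_ne
          apply pow_ne_zero
          have := polyD_ne d 0 p hn
          simpa [orb] using this
        have h7 : G * B * orb d X p ^ (d - 1) = A := by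
          apply toRF_inj
          rw [toRF_mul, toRF_mul, h6]
          field_simp
        apply hA
        rw [← h7]
        simp [hφ]
      · exact hno h5
end Exact

section Arith
variable {R : Type*} [CommRing R] [IsDomain R]

lemma isUnit_of_max {u : R} (h : ∀ P : Ideal R, P.IsMaximal → u ∉ P) : IsUnit u := by
  by_contra hu
  obtain ⟨P, hP, h1⟩ := exists_max_ideal_of_mem_nonunits hu
  exact h P hP h1

lemma mem_orb_iff (d : ℕ) (c : R) (P : Ideal R) (i : ℕ) :
    orb d c i ∈ P ↔
      Function.IsPeriodicPt (fun x => x ^ d + Ideal.Quotient.mk P c) i 0 := by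
  have := orb_periodic_iff d (Ideal.Quotient.mk P c) 0 i
  simp only [zero_add] at this
  rw [← Ideal.Quotient.eq_zero_iff_mem, orb_map]
  simpa [orb] using this

lemma H2' (d m n : ℕ) [hd : Fact d.Prime] (c : R)
    (H2 : orb d c (m + n) - orb d c m = 0) (j : ℕ) (hj : m ≤ j) : orb d c (j + n) - orb d c j = 0 := by
  have := orb_dvd' d c n hj
  rw [H2] at this
  exact zero_dvd_iff.1 this

lemma mem_n (d m n : ℕ) [hd : Fact d.Prime] (c : R)
    (H2 : orb d c (m + n) - orb d c m = 0) (P : Ideal R) (i : ℕ) (hi : 1 ≤ i) (h : orb d c i ∈ P) : orb d c n ∈ P := by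
  have h1 : orb d c (i * m) ∈ P := by
    rw [mem_orb_iff] at h ⊢
    exact h.mul_const m
  have h2 := H2' d m n c H2 (i * m) (Nat.le_mul_of_pos_left m hi)
  have h3 : orb d c (i * m + n) ∈ P := by
    rw [sub_eq_zero.1 h2]; exact h1
  rw [mem_orb_iff] at *
  rw [add_comm] at h3
  exact h3.left_of_add h1

lemma mem_dvd (d m n : ℕ) [hd : Fact d.Prime] (c : R)
    (H1 : ∀ j k, 1 ≤ k → orb d c (j + k) - orb d c j = 0 → n ∣ k)
    (H2 : orb d c (m + n) - orb d c m = 0) (hn : 1 ≤ n) (P : Ideal R) (hP : P ≠ ⊤) (i : ℕ) (hi : 1 ≤ i) (h : orb d c i ∈ P) :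
    n ∣ i := by
  have hA := mem_n d m n c H2 P i hi h
  have hr1 : 1 ≤ i.gcd n := Nat.gcd_pos_of_pos_left _ hi
  have hr : orb d c (i.gcd n) ∈ P := by
    rw [mem_orb_iff] at *
    exact h.gcd hA
  obtain ⟨q, hq⟩ := Nat.gcd_dvd_right i n
  have hdi := Nat.gcd_dvd_left i n
  set r := i.gcd n
  have hq1 : 1 ≤ q := Nat.pos_of_ne_zero (by rintro rfl; simp at hq; omega)
  have hj : orb d c (r * m) ∈ P := by
    rw [mem_orb_iff] at *
    exact hr.mul_const m
  have hj' : orb d c (r * m + r) ∈ P := by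
    rw [mem_orb_iff] at *
    exact hj.add hr
  obtain ⟨π, h1, h2⟩ := orb_mul' d c P (r * m) r hr1 (gs_mem d hd.out.two_le P hj' hj) (q - 1)
  rw [Nat.sub_add_cancel hq1, mul_comm q r, ← hq,
    H2' d m n c H2 (r * m) (Nat.le_mul_of_pos_left m hr1)] at h2
  rcases mul_eq_zero.1 h2.symm with h3 | h3
  · exact (H1 _ _ hr1 h3).trans hdi
  · exfalso
    apply hP
    rw [Ideal.eq_top_iff_one]
    have : (1 : R) = -π := by linear_combination h3
    rw [this]
    exact P.neg_mem h1

lemma unit_orb (d m n : ℕ) [hd : Fact d.Prime] (c : R)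
    (H1 : ∀ j k, 1 ≤ k → orb d c (j + k) - orb d c j = 0 → n ∣ k)
    (H2 : orb d c (m + n) - orb d c m = 0) (hn : 1 ≤ n) (i : ℕ) (hi : 1 ≤ i) (h : ¬ n ∣ i) : IsUnit (orb d c i) :=
  isUnit_of_max fun P hP h1 => h (mem_dvd d m n c H1 H2 hn P hP.ne_top i hi h1)

lemma mem_of_d (d m n : ℕ) [hd : Fact d.Prime] (c : R)
    (H2 : orb d c (m + n) - orb d c m = 0) (P : Ideal R) (hP : P.IsMaximal) (h : (d : R) ∈ P) : orb d c n ∈ P := by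
  have : CharP (R ⧸ P) d := by
    have h1 : ((d : ℕ) : R ⧸ P) = 0 := by
      have := Ideal.Quotient.eq_zero_iff_mem.2 h
      simpa using this
    have : Nontrivial (R ⧸ P) := Ideal.Quotient.nontrivial_iff.2 hP.ne_top
    exact ringChar.of_eq (CharP.ringChar_of_prime_eq_zero hd.out h1)
  have h2 := congrArg (Ideal.Quotient.mk P) H2
  rw [map_sub, orb_map, orb_map, orb_char, map_zero, ← orb_map, ← map_pow,
    Ideal.Quotient.eq_zero_iff_mem] at h2
  exact hP.isPrime.mem_of_pow_mem _ h2

lemma A_ne (d m n : ℕ) [hd : Fact d.Prime] (c : R)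
    (H2 : orb d c (m + n) - orb d c m = 0)
    (H3 : orb d c (m - 1 + n) - orb d c (m - 1) ≠ 0) : orb d c n ≠ 0 := by
  intro h
  apply H3
  have := orb_dvd' d c n (Nat.zero_le (m - 1))
  simp only [zero_add, orb, h, sub_zero] at this
  exact zero_dvd_iff.1 this

lemma exists_t (d m n : ℕ) [hd : Fact d.Prime] (hm : 2 ≤ m) (hn : 1 ≤ n) (c : R)
    (H1 : ∀ j k, 1 ≤ k → orb d c (j + k) - orb d c j = 0 → n ∣ k)
    (H2 : orb d c (m + n) - orb d c m = 0)
    (H3 : orb d c (m - 1 + n) - orb d c (m - 1) ≠ 0) : ∃ t : R, Associated (t ^ (d - 1)) (d : R) ∧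
    orb d c (m - 1 + n) - orb d c (m - 1) = (if n ∣ m - 1 then orb d c n else 1) * t := by
  have hd2 := hd.out.two_le
  have hE : gs d (orb d c (m - 1 + n)) (orb d c (m - 1)) = 0 := by
    have := orb_step d c (m - 1) n
    rw [show m - 1 + 1 = m by omega, H2] at this
    exact (mul_eq_zero.1 this.symm).resolve_left H3
  set A := orb d c n with hA
  have hA0 : A ≠ 0 := A_ne d m n c H2 H3
  -- decomposition
  obtain ⟨u, t, hu, hv, hx⟩ : ∃ u t : R, IsUnit u ∧
      orb d c (m - 1) = (if n ∣ m - 1 then A else 1) * u ∧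
      orb d c (m - 1 + n) - orb d c (m - 1) = (if n ∣ m - 1 then A else 1) * t := by
    split_ifs with h
    · obtain ⟨r, hr⟩ := h
      have hr1 : 1 ≤ r := Nat.pos_of_ne_zero (by rintro rfl; omega)
      obtain ⟨w, hw⟩ := orb_zero_mul d hd2 c n hn (r - 1)
      rw [Nat.sub_add_cancel hr1, mul_comm, ← hr] at hw
      obtain ⟨t, ht⟩ := orb_dvd' d c n (Nat.zero_le (m - 1))
      simp only [zero_add, orb, sub_zero] at ht
      refine ⟨_, t, ?_, hw, ht⟩
      apply isUnit_of_max
      intro P hP h1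
      have h2 : orb d c (m - 1) ∈ P := by rw [hw]; exact P.mul_mem_left _ h1
      have h3 := mem_n d m n c H2 P _ (by omega) h2
      apply hP.ne_top
      rw [Ideal.eq_top_iff_one]
      have := P.sub_mem h1 (P.mul_mem_right w h3)
      simpa using this
    · exact ⟨_, _, unit_orb d m n c H1 H2 hn (m - 1) (by omega) h, (one_mul _).symm,
        (one_mul _).symm⟩
  refine ⟨t, ?_, hx⟩
  set e := (if n ∣ m - 1 then A else 1) with he
  have he0 : e ≠ 0 := by rw [he]; split_ifs; exacts [hA0, one_ne_zero]
  have ht0 : t ≠ 0 := by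
    rintro rfl
    rw [mul_zero] at hx
    exact H3 hx
  have hv' : orb d c (m - 1 + n) = e * (u + t) := by linear_combination hx + hv
  rw [hv', hv, gs_smul] at hE
  have hE' := (mul_eq_zero.1 hE).resolve_left (pow_ne_zero _ he0)
  obtain ⟨Q, hQ⟩ := gs_binom d hd.out u t ht0
  rw [hQ] at hE'
  have hun : IsUnit (u ^ (d - 1) + t * Q) := by
    apply isUnit_of_max
    intro P hP h1
    have h2 : t ^ (d - 1) ∈ P := by
      have : t ^ (d - 1) = - (d * (u ^ (d - 1) + t * Q)) := by linear_combination hE'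
      rw [this]
      exact P.neg_mem (P.mul_mem_left _ h1)
    have h3 := hP.isPrime.mem_of_pow_mem _ h2
    have h4 : u ^ (d - 1) ∈ P := by
      have := P.sub_mem h1 (P.mul_mem_right Q h3)
      simpa using this
    exact hP.ne_top (P.eq_top_of_isUnit_mem (hP.isPrime.mem_of_pow_mem _ h4) hu)
  obtain ⟨v, hv⟩ := hun
  rw [← hv] at hE'
  refine Associated.symm ⟨-v, ?_⟩
  push_cast
  linear_combination -hE'

lemma ladder (d m n : ℕ) [hd : Fact d.Prime] (c : R)
    (H2 : orb d c (m + n) - orb d c m = 0) (hA0 : orb d c n ≠ 0) (t : R) (ht : Associated (t ^ (d - 1)) (d : R))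
    (hx : orb d c (m - 1 + n) - orb d c (m - 1) ∣ orb d c n * t) (j : ℕ) (hj : j + 1 ≤ m - 1) :
    Associated (orb d c n ^ d ^ (j + 1)) (orb d c (j + 1 + n) - orb d c (j + 1)) := by
  have hd2 := hd.out.two_le
  have htd : t ∣ (d : R) := (dvd_pow_self t (by omega)).trans ht.dvd
  have hP0 : ∀ P : Ideal R, P.IsMaximal → orb d c (m - 1 + n) - orb d c (m - 1) ∈ P →
      orb d c n ∈ P := by
    intro P hP h
    have h1 := P.mem_of_dvd hx h
    rcases hP.isPrime.mem_or_mem h1 with h2 | h2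
    · exact h2
    · exact mem_of_d d m n c H2 P hP (P.mem_of_dvd htd h2)
  set A := orb d c n with hA
  induction j with
  | zero =>
    have : orb d c (0 + 1 + n) - orb d c (0 + 1) = A ^ d := by
      rw [show 0 + 1 + n = n + 1 by ring]
      simp [orb, hA, zero_pow hd.out.ne_zero]
    rw [this]
    simp
  | succ j ih =>
    specialize ih (by omega)
    set N := d ^ (j + 1) with hN
    have hN2 : 2 ≤ N := by
      calc 2 ≤ d := hd2
        _ = d ^ 1 := (pow_one d).symm
        _ ≤ N := Nat.pow_le_pow_right (by omega) (by omega)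
    obtain ⟨u, hu⟩ := ih
    -- the recursion
    obtain ⟨w, hw⟩ : ∃ w, orb d c (j + 1 + 1 + n) - orb d c (j + 1 + 1) =
        (A ^ N * u) ^ d + d * (A ^ N * u) * w := by
      obtain ⟨w, hw⟩ := exists_add_pow_prime_eq hd.out (A ^ N * u) (orb d c (j + 1))
      refine ⟨orb d c (j + 1) * w, ?_⟩
      have e1 : orb d c (j + 1 + n) = A ^ N * u + orb d c (j + 1) := by rw [hu]; ring
      rw [show j + 1 + 1 + n = (j + 1 + n) + 1 by ring, orb, e1, hw]
      rw [show orb d c (j + 1 + 1) = orb d c (j + 1) ^ d + c from rfl]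
      ring
    have hstep : orb d c (j + 1 + 1 + n) - orb d c (j + 1 + 1) ∣ A * t :=
      (orb_dvd' d c n hj).trans hx
    have hcancel : ∀ k, A ^ (k + 1) ∣ A * t → A ^ k ∣ t := by
      intro k hk
      rw [pow_succ'] at hk
      exact (mul_dvd_mul_iff_left hA0).1 hk
    have hfac : ∀ k, k + 1 ≤ N → A ^ (k + 1) ∣ (d : R) → A ^ (N + (k + 1)) ∣ A * t := by
      intro k hk h1
      refine dvd_trans ?_ hstep
      rw [hw]
      refine dvd_add ?_ ?_
      · rw [mul_pow, ← pow_mul]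
        refine (pow_dvd_pow A ?_).mul_right _
        nlinarith
      · rw [pow_add, mul_comm (A ^ N)]
        exact (mul_dvd_mul h1 (dvd_mul_right _ _)).mul_right _
    have h1 : A ^ (N - 1) ∣ t := by
      apply hcancel
      rw [Nat.sub_add_cancel (by omega)]
      refine dvd_trans ?_ hstep
      rw [hw]
      refine dvd_add ?_ ?_
      · exact dvd_pow (dvd_mul_right _ _) (by omega)
      · exact Dvd.dvd.mul_right (Dvd.dvd.mul_left (dvd_mul_right _ _) _) _
    have h2 : A ^ (N + (N - 2)) ∣ t := by
      apply hcancel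
      have := hfac (N - 2) (by omega) (by
        rw [show N - 2 + 1 = N - 1 by omega]; exact h1.trans htd)
      rwa [show N + (N - 2) + 1 = N + (N - 2 + 1) by ring]
    have h3 : A ^ (N + (N - 1)) ∣ t := by
      apply hcancel
      have := hfac (N - 1) (by omega) (by
        rw [show N - 1 + 1 = N by omega]
        exact ((pow_dvd_pow A (by omega)).trans h2).trans htd)
      rwa [show N + (N - 1) + 1 = N + (N - 1 + 1) by ring]
    have h4 : A ^ (N * (d - 1) + 1) ∣ (d : R) := by
      refine dvd_trans ?_ ht.dvd
      refine dvd_trans ?_ (pow_dvd_pow_of_dvd h3 (d - 1))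
      rw [← pow_mul]
      apply pow_dvd_pow
      rw [add_mul]
      have : 1 ≤ (N - 1) * (d - 1) := Nat.mul_pos (by omega) (by omega)
      omega
    obtain ⟨z, hz⟩ := h4
    have hfin : orb d c (j + 1 + 1 + n) - orb d c (j + 1 + 1) =
        A ^ (N * d) * (u ^ d + A * (z * u * w)) := by
      rw [hw, hz]
      have e : N * d = N * (d - 1) + N := by
        obtain ⟨e, rfl⟩ : ∃ e, d = e + 1 := ⟨d - 1, by omega⟩
        simp; ring
      rw [mul_pow, ← pow_mul, e, pow_add, pow_add]
      ring
    have hunit : IsUnit ((u : R) ^ d + A * (z * u * w)) := by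
      apply isUnit_of_max
      intro P hP h5
      have h6 : orb d c (m - 1 + n) - orb d c (m - 1) ∈ P := by
        refine P.mem_of_dvd (orb_dvd' d c n hj) ?_
        rw [hfin]
        exact P.mul_mem_left _ h5
      have h7 := hP0 P hP h6
      have h8 : (u : R) ^ d ∈ P := by
        have := P.sub_mem h5 (P.mul_mem_right (z * u * w) h7)
        simpa using this
      exact hP.ne_top (P.eq_top_of_isUnit_mem h8 (u.isUnit.pow d))
    rw [hfin, pow_succ d (j + 1), ← hN]
    exact associated_mul_unit_right _ _ hunit

lemma arith_main (d m n : ℕ) [hd : Fact d.Prime] (hm : 2 ≤ m) (hn : 1 ≤ n) (c : R)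
    (H1 : ∀ j k, 1 ≤ k → orb d c (j + k) - orb d c j = 0 → n ∣ k)
    (H2 : orb d c (m + n) - orb d c m = 0)
    (H3 : orb d c (m - 1 + n) - orb d c (m - 1) ≠ 0) : Associated (orb d c n ^
    (if n ∣ m - 1 then (d ^ (m - 1) - 1) * (d - 1) else d ^ (m - 1) * (d - 1))) (d : R) := by
  have hA0 := A_ne d m n c H2 H3
  obtain ⟨t, ht, hx⟩ := exists_t d m n hm hn c H1 H2 H3
  have hl := ladder d m n c H2 hA0 t ht (by
    rw [hx]
    split_ifs
    · exact dvd_rfl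
    · rw [one_mul]; exact dvd_mul_left _ _) (m - 2) (by omega)
  rw [show m - 2 + 1 = m - 1 by omega, hx] at hl
  refine Associated.trans ?_ ht
  split_ifs at hl ⊢ with h
  · rw [pow_mul]
    refine Associated.pow_pow ?_
    have h1 : d ^ (m - 1) = (d ^ (m - 1) - 1) + 1 :=
      (Nat.sub_add_cancel (Nat.pos_of_ne_zero (pow_ne_zero _ hd.out.ne_zero))).symm
    rw [h1, pow_succ'] at hl
    exact Associated.of_mul_left hl (Associated.refl _) hA0
  · rw [one_mul] at hl
    rw [pow_mul]
    exact Associated.pow_pow hl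
end Arith

lemma G0Rat_eq (d n : ℕ) : G0Rat d n = ∏ k ∈ n.divisors,
    toRF (orb d X k) ^ (ArithmeticFunction.moebius (n / k)) := by
  simp only [G0Rat, critPoly_eq_orb]

lemma orbX_ne (d : ℕ) [hd : Fact d.Prime] (k : ℕ) (hk : 1 ≤ k) : orb d (X : ℤ[X]) k ≠ 0 := by
  have := polyD_ne d 0 k hk
  simpa [orb] using this

lemma G0_assoc {R : Type*} [CommRing R] [IsDomain R] (d n : ℕ) [hd : Fact d.Prime] (hn : 1 ≤ n)
    (G0 : ℤ[X]) (hG0 : IsG0 d n G0) (φ : ℤ[X] →+* R)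
    (hu : ∀ i, 1 ≤ i → ¬ n ∣ i → IsUnit (orb d (φ X) i)) :
    Associated (φ G0) (orb d (φ X) n) := by
  let S : Submonoid ℤ[X] := (IsUnit.submonoid R).comap φ
  have hS : ∀ A, A ∈ S ↔ IsUnit (φ A) := fun A => Iff.rfl
  have h0 : (0 : ℤ[X]) ∉ S := by rw [hS]; simp
  have := mob h0 n hn n (toRF (orb d X n)) (fun _ => toRF_ne (orbX_ne d n hn))
    (fun k => toRF (orb d X k)) (by
      intro k hk
      have hk1 := Nat.pos_of_mem_divisors hk
      have hk2 := Nat.dvd_of_mem_divisors hk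
      split_ifs with h
      · rw [Nat.dvd_antisymm hk2 h]
        exact RelS.refl _
      · apply RelS.of_mem
        rw [hS, orb_map]
        exact hu k hk1 h)
  rw [if_pos rfl, ← G0Rat_eq] at this
  rw [IsG0] at hG0
  rw [← hG0] at this
  obtain ⟨A, hA, B, hB, h⟩ := this
  rw [← toRF_mul, ← toRF_mul] at h
  have h1 := congrArg φ (toRF_inj h)
  rw [map_mul, map_mul, orb_map] at h1
  rw [hS] at hA hB
  have e1 : Associated (φ G0) (φ G0 * φ B) := associated_mul_unit_right _ _ hB
  have e2 : Associated (orb d (φ X) n) (orb d (φ X) n * φ A) := associated_mul_unit_right _ _ hA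
  rw [h1] at e1
  exact e1.trans e2.symm

lemma G0_sqfree (d n : ℕ) [hd : Fact d.Prime] (hn : 1 ≤ n)
    (G0 : ℤ[X]) (hG0 : IsG0 d n G0) (g : (ZMod d)[X]) (hg : Irreducible g)
    (h : g * g ∣ G0.map (Int.castRingHom (ZMod d))) : False := by
  have hgp : Prime g := hg.prime
  have : (Ideal.span {g}).IsPrime := (Ideal.span_singleton_prime hg.ne_zero).2 hgp
  let ρ : ℤ[X] →+* (ZMod d)[X] := Polynomial.mapRingHom (Int.castRingHom (ZMod d))
  let φ : ℤ[X] →+* (ZMod d)[X] ⧸ Ideal.span {g} := (Ideal.Quotient.mk _).comp ρ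
  have hφ : ∀ A, φ A = 0 ↔ g ∣ ρ A := by
    intro A
    simp only [φ, RingHom.comp_apply]
    rw [Ideal.Quotient.eq_zero_iff_mem, Ideal.mem_span_singleton]
  have hρX : ρ X = X := by simp [ρ]
  change g * g ∣ ρ G0 at h
  obtain ⟨r, hr⟩ := exists_period d (φ X)
  have hr : ∀ k, 1 ≤ k → (φ (orb d X k) = 0 ↔ (r ∣ k ∧ φ (orb d X r) = 0)) := by
    intro k hk
    rw [orb_map, orb_map]
    simpa [orb] using hr 0 k hk
  have hrel := mob (zero_nzS φ) n hn r (toRF (orb d X r))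
    (fun h => toRF_ne (orbX_ne d r (Nat.pos_of_dvd_of_pos h hn)))
    (fun k => toRF (orb d X k)) (by
      intro k hk
      have hk1 : 1 ≤ k := Nat.pos_of_mem_divisors hk
      split_ifs with h
      · by_cases h2 : φ (orb d X r) = 0
        · obtain ⟨q, rfl⟩ := h
          have hr1 : 1 ≤ r := Nat.pos_of_ne_zero (by rintro rfl; simp at hk1)
          have hq1 : 1 ≤ q := Nat.pos_of_ne_zero (by rintro rfl; simp at hk1)
          obtain ⟨w, hw⟩ := orb_zero_mul d hd.out.two_le (X : ℤ[X]) r hr1 (q - 1)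
          rw [Nat.sub_add_cancel hq1, mul_comm] at hw
          refine ⟨1 + orb d X r * w, ?_, 1, (nzS φ).one_mem, ?_⟩
          · rw [mem_nzS, map_add, map_mul, h2]
            simp
          · rw [toRF_one, mul_one, ← toRF_mul, hw]
        · have h3 : φ (orb d X k) ≠ 0 := fun h4 => h2 ((hr k hk1).1 h4).2
          exact (RelS.of_mem (S := nzS φ) h3).trans (RelS.of_mem (S := nzS φ) h2).symm
      · exact RelS.of_mem (S := nzS φ) (fun h4 => h ((hr k hk1).1 h4).1))
  rw [← G0Rat_eq] at hrel
  rw [IsG0] at hG0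
  rw [← hG0] at hrel
  have hφ0 : φ G0 = 0 := (hφ _).2 ((dvd_mul_right g g).trans h)
  split_ifs at hrel with hrn
  · subst hrn
    obtain ⟨A, hA, B, hB, h1⟩ := hrel
    rw [← toRF_mul, ← toRF_mul] at h1
    have h2 := congrArg ρ (toRF_inj h1)
    rw [map_mul, map_mul, orb_map, hρX] at h2
    have hA' : ¬ g ∣ ρ A := fun h => hA ((hφ A).2 h)
    have h3 : g ^ 2 ∣ orb d X r * ρ A := by
      rw [← h2, pow_two]
      exact h.mul_right _
    have h4 := hgp.pow_dvd_of_dvd_mul_right 2 hA' h3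
    obtain ⟨q, hq⟩ := h4
    have h5 := poly_ne d r hn
    rw [hq] at h5
    apply hg.not_isUnit
    apply isUnit_of_dvd_one
    rw [← h5]
    refine ⟨2 * derivative g * q + g * derivative q, ?_⟩
    rw [pow_two, derivative_mul, derivative_mul]
    ring
  · exact not_rel_one φ G0 hφ0 hrel

lemma map_eq_dvd {R : Type*} [CommRing R] (d : ℕ) (φ : ℤ[X] →+* R) (p q : ℤ[X])
    (h : p.map (Int.castRingHom (ZMod d)) = q.map (Int.castRingHom (ZMod d))) :
    ∃ w : R, φ p = φ q + d * w := by
  have h1 : (C (d : ℤ)) ∣ p - q := by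
    rw [Polynomial.C_dvd_iff_dvd_coeff]
    intro i
    have := congrArg (fun f => f.coeff i) h
    simp only [coeff_map, eq_intCast] at this
    rw [coeff_sub, ← ZMod.intCast_zmod_eq_zero_iff_dvd]
    push_cast
    rw [this, sub_self]
  obtain ⟨w, hw⟩ := h1
  refine ⟨φ w, ?_⟩
  have := congrArg φ hw
  rw [map_sub, map_mul] at this
  have h2 : φ (C (d : ℤ)) = d := by simp
  rw [h2] at this
  linear_combination this

lemma span_mul_span {R : Type*} [CommRing R] (D x y : R)
    (h : IsCoprime (Ideal.span {D, x}) (Ideal.span {D, y})) :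
    Ideal.span {D, x} * Ideal.span {D, y} = Ideal.span {D, x * y} := by
  apply le_antisymm
  · rw [Ideal.span_mul_span', Ideal.span_le]
    rintro _ ⟨a, ha, b, hb, rfl⟩
    have hD : D ∈ Ideal.span {D, x * y} := Ideal.subset_span (by simp)
    have hxy : x * y ∈ Ideal.span {D, x * y} := Ideal.subset_span (by simp)
    rcases ha with rfl | rfl
    · exact Ideal.mul_mem_right _ _ hD
    · rcases hb with rfl | rfl
      · exact Ideal.mul_mem_left _ _ hD
      · exact hxy
  · rw [Ideal.span_le]
    rintro _ (rfl | rfl)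
    · rw [Ideal.mul_eq_inf_of_coprime h.sup_eq]
      exact ⟨Ideal.subset_span (by simp), Ideal.subset_span (by simp)⟩
    · exact Ideal.mul_mem_mul (Ideal.subset_span (by simp)) (Ideal.subset_span (by simp))

lemma prod_span {R : Type*} [CommRing R] {ι : Type*} (D : R) (y : ι → R) (s : Finset ι)
    (h : ∀ i ∈ s, ∀ j ∈ s, i ≠ j → IsCoprime (Ideal.span {D, y i}) (Ideal.span {D, y j})) :
    ∏ i ∈ s, Ideal.span {D, y i} = Ideal.span {D, ∏ i ∈ s, y i} := by
  classical
  induction s using Finset.induction_on with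
  | empty =>
    simp only [Finset.prod_empty, Ideal.one_eq_top]
    symm
    rw [Ideal.eq_top_iff_one]
    exact Ideal.subset_span (by simp)
  | insert a s ha ih =>
    have ih := ih fun i hi j hj => h i (by simp [hi]) j (by simp [hj])
    have hc : IsCoprime (Ideal.span {D, y a}) (∏ i ∈ s, Ideal.span {D, y i}) := by
      apply IsCoprime.prod_right
      intro i hi
      exact h a (by simp) i (by simp [hi]) (by rintro rfl; exact ha hi)
    rw [Finset.prod_insert ha, Finset.prod_insert ha, ih]
    rw [ih] at hc
    exact span_mul_span _ _ _ hc

/-- Let `d` be a prime, `m ≥ 2`, `n ≥ 1`. Suppose the reduction of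
`G_{d,0,n}` modulo `d` factors as `f_1 ⋯ f_k` with the `f_i ∈ 𝔽_d[c]` distinct irreducible,
and let `f̃_i ∈ ℤ[c]` be any lifts. If `c₀` is a root of `G_{d,m,n}` and `K = ℚ(c₀)`, then
`(d) = (d, f̃_1(c₀))^{M_{m,n}} ⋯ (d, f̃_k(c₀))^{M_{m,n}}` in `O_K`, where
`M_{m,n} = d^{m-1}(d-1)` if `n ∤ m-1` and `M_{m,n} = (d^{m-1}-1)(d-1)` if `n ∣ m-1`. -/
theorem span_d_ideal_factorization (d m n : ℕ) [hd : Fact d.Prime] (hm : 2 ≤ m) (hn : 1 ≤ n)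
    (G G0 : Polynomial ℤ) (hG : IsMisiurewicz d m n G) (hG0 : IsG0 d n G0)
    (k : ℕ) (f : Fin k → Polynomial (ZMod d))
    (hfirr : ∀ i, Irreducible (f i)) (hfdist : Function.Injective f)
    (hfact : G0.map (Int.castRingHom (ZMod d)) = ∏ i, f i)
    (ft : Fin k → Polynomial ℤ) (hlift : ∀ i, (ft i).map (Int.castRingHom (ZMod d)) = f i)
    (K : Type*) [Field K] [NumberField K] (c₀ : NumberField.RingOfIntegers K)
    (hroot : Polynomial.aeval (c₀ : K) G = 0)
    (hgen : Algebra.adjoin ℚ {(c₀ : K)} = ⊤) :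
    Ideal.span {(d : NumberField.RingOfIntegers K)} =
      ∏ i, Ideal.span {(d : NumberField.RingOfIntegers K), Polynomial.aeval c₀ (ft i)} ^
        (if n ∣ m - 1 then (d ^ (m - 1) - 1) * (d - 1) else d ^ (m - 1) * (d - 1)) := by
  have hd2 := hd.out.two_le
  let φ : ℤ[X] →+* NumberField.RingOfIntegers K := (Polynomial.aeval c₀).toRingHom
  have hφ : ∀ p, φ p = Polynomial.aeval c₀ p := fun p => rfl
  have hdR : ∀ w : NumberField.RingOfIntegers K, 1 + d * w ≠ 0 := by
    intro w hw
    have h1 : IsUnit (algebraMap ℤ (NumberField.RingOfIntegers K) (d : ℤ)) := by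
      apply IsUnit.of_mul_eq_one (-w)
      simp
      linear_combination -hw
    have h2 := isUnit_of_map_unit _ _ h1
    rw [Int.isUnit_iff] at h2
    omega
  have hφG : φ G = 0 := by
    apply NumberField.RingOfIntegers.coe_injective
    rw [hφ, map_zero, ← Polynomial.aeval_algebraMap_apply]
    exact hroot
  obtain ⟨H1, H2, H3⟩ := exact_type d m n hm hn G hG φ hdR hφG
  have hmain := arith_main d m n hm hn (φ X) H1 H2 H3
  have hG0a := G0_assoc d n hn G0 hG0 φ
    (fun i hi h => unit_orb d m n (φ X) H1 H2 hn i hi h)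
  have hMpos : (if n ∣ m - 1 then (d ^ (m - 1) - 1) * (d - 1) else d ^ (m - 1) * (d - 1)) ≠ 0 := by
    have h1 : 2 ≤ d ^ (m - 1) := by
      calc 2 ≤ d := hd2
        _ = d ^ 1 := (pow_one d).symm
        _ ≤ d ^ (m - 1) := Nat.pow_le_pow_right (by omega) (by omega)
    split_ifs
    · exact mul_ne_zero (by omega) (by omega)
    · exact mul_ne_zero (by omega) (by omega)
  generalize (if n ∣ m - 1 then (d ^ (m - 1) - 1) * (d - 1) else d ^ (m - 1) * (d - 1)) = M at *
  have hM : Associated (φ G0 ^ M) (d : NumberField.RingOfIntegers K) :=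
    (Associated.pow_pow hG0a).trans hmain
  rw [Finset.prod_pow]
  have hcop : ∀ i ∈ Finset.univ, ∀ j ∈ (Finset.univ : Finset (Fin k)), i ≠ j →
      IsCoprime (Ideal.span {(d : NumberField.RingOfIntegers K), Polynomial.aeval c₀ (ft i)})
        (Ideal.span {(d : NumberField.RingOfIntegers K), Polynomial.aeval c₀ (ft j)}) := by
    intro i _ j _ hij
    have hc : IsCoprime (f i) (f j) := by
      rw [(hfirr i).coprime_iff_not_dvd]
      intro hdiv
      apply G0_sqfree d n hn G0 hG0 (f i) (hfirr i)
      rw [hfact, ← Finset.mul_prod_erase _ _ (Finset.mem_univ i)]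
      apply mul_dvd_mul_left
      exact hdiv.trans (Finset.dvd_prod_of_mem _ (by simp [Ne.symm hij]))
    obtain ⟨a, b, hab⟩ := hc
    have hsurj := Polynomial.map_surjective (Int.castRingHom (ZMod d)) (ZMod.ringHom_surjective _)
    obtain ⟨a', rfl⟩ := hsurj a
    obtain ⟨b', rfl⟩ := hsurj b
    rw [← hlift i, ← hlift j, ← Polynomial.map_mul, ← Polynomial.map_mul, ← Polynomial.map_add,
      ← Polynomial.map_one (Int.castRingHom (ZMod d))] at hab
    obtain ⟨w, hw⟩ := map_eq_dvd d φ _ _ hab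
    rw [map_add, map_mul, map_mul, map_one, hφ (ft i), hφ (ft j)] at hw
    rw [Ideal.isCoprime_iff_add, Ideal.one_eq_top, Ideal.eq_top_iff_one, Submodule.add_eq_sup]
    have e : (1 : NumberField.RingOfIntegers K) = (φ a' * aeval c₀ (ft i) - w * d) +
      φ b' * aeval c₀ (ft j) := by linear_combination -hw
    rw [e]
    refine Submodule.add_mem_sup ?_ ?_
    · exact Ideal.sub_mem _ (Ideal.mul_mem_left _ _ (Ideal.subset_span (by simp)))
        (Ideal.mul_mem_left _ _ (Ideal.subset_span (by simp)))
    · exact Ideal.mul_mem_left _ _ (Ideal.subset_span (by simp))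
  rw [prod_span _ _ _ hcop]
  have hspan : Ideal.span {(d : NumberField.RingOfIntegers K),
      ∏ i, Polynomial.aeval c₀ (ft i)} = Ideal.span {φ G0} := by
    obtain ⟨w, hw⟩ := map_eq_dvd d φ G0 (∏ i, ft i) (by
      rw [hfact, Polynomial.map_prod]
      exact Finset.prod_congr rfl fun i _ => (hlift i).symm)
    rw [map_prod] at hw
    have hdG : φ G0 ∣ (d : NumberField.RingOfIntegers K) := (dvd_pow_self _ hMpos).trans hM.dvd
    apply le_antisymm
    · rw [Ideal.span_le]
      rintro _ (rfl | rfl)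
      · exact Ideal.mem_span_singleton.2 hdG
      · refine Ideal.mem_span_singleton.2 ?_
        have : ∏ i, Polynomial.aeval c₀ (ft i) = φ G0 - d * w := by
          rw [hw]; simp [hφ]
        rw [this]
        exact dvd_sub dvd_rfl (hdG.mul_right _)
    · rw [Ideal.span_le]
      rintro _ rfl
      rw [hw]
      exact Ideal.add_mem _ (Ideal.subset_span (by simp [hφ]))
        (Ideal.mul_mem_right _ _ (Ideal.subset_span (by simp)))
  rw [hspan, Ideal.span_singleton_pow, Ideal.span_singleton_eq_span_singleton]
  exact hM.symm
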